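/- The four-point LM mass-matrix integration rule is exact whenever the metric is an affine function: for every affine map g : ℝ³ → ℝ and all i, j ∈ {1,…,15}, ∫_W φ^i φ^j g dV = Σ_{k=1}^{4} (∫_W φ^i φ^j φ_LM^k dV) · g(p_k), where the integrals are with respect to Lebesgue measure on W. -/

import Mathlib

open MeasureTheory MvPolynomial

/-- The fifteen shape functions of the 15-node wedge element, in natural
coordinates `x = (ξ, η, ζ)` with `ξ = x 0`, `η = x 1`, `ζ = x 2`. -/
noncomputable def wedgeShape : Fin 15 → (Fin 3 → ℝ) → ℝ :=
  ![fun x => -((1 - x 0 - x 1) * (1 - x 2) * (2 * x 0 + 2 * x 1 + x 2)) / 2,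
    fun x => x 0 * (1 - x 2) * (2 * x 0 - x 2 - 2) / 2,
    fun x => x 1 * (1 - x 2) * (2 * x 1 - x 2 - 2) / 2,
    fun x => -((1 - x 0 - x 1) * (1 + x 2) * (2 * x 0 + 2 * x 1 - x 2)) / 2,
    fun x => x 0 * (1 + x 2) * (2 * x 0 + x 2 - 2) / 2,
    fun x => x 1 * (1 + x 2) * (2 * x 1 + x 2 - 2) / 2,
    fun x => 2 * x 0 * (1 - x 0 - x 1) * (1 - x 2),
    fun x => 2 * x 0 * x 1 * (1 - x 2),
    fun x => 2 * x 1 * (1 - x 0 - x 1) * (1 - x 2),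
    fun x => 2 * x 0 * (1 - x 0 - x 1) * (1 + x 2),
    fun x => 2 * x 0 * x 1 * (1 + x 2),
    fun x => 2 * x 1 * (1 - x 0 - x 1) * (1 + x 2),
    fun x => (1 - x 0 - x 1) * (1 - x 2 ^ 2),
    fun x => x 0 * (1 - x 2 ^ 2),
    fun x => x 1 * (1 - x 2 ^ 2)]

/-- Natural coordinates of the fifteen nodes of the wedge element. -/
noncomputable def wedgeNode : Fin 15 → Fin 3 → ℝ :=
  ![![0, 0, -1], ![1, 0, -1], ![0, 1, -1],
    ![0, 0, 1], ![1, 0, 1], ![0, 1, 1],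
    ![1/2, 0, -1], ![1/2, 1/2, -1], ![0, 1/2, -1],
    ![1/2, 0, 1], ![1/2, 1/2, 1], ![0, 1/2, 1],
    ![0, 0, 0], ![1, 0, 0], ![0, 1, 0]]

/-- Reference domain of the fifteen-node wedge element. -/
def wedgeDomain : Set (Fin 3 → ℝ) :=
  {x | 0 ≤ x 0 ∧ 0 ≤ x 1 ∧ x 0 + x 1 ≤ 1 ∧ -1 ≤ x 2 ∧ x 2 ≤ 1}

/-- Linear-metric (LM) interpolation functions. -/
noncomputable def phiLM : Fin 4 → (Fin 3 → ℝ) → ℝ :=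
  ![fun x => 83/12 - 10 * x 0 - 10 * x 1 - 10 * x 2,
    fun x => -37/12 + 10 * x 0,
    fun x => -37/12 + 10 * x 1,
    fun x => 1/4 + 10 * x 2]

/-- The four LM evaluation points. -/
noncomputable def ptLM : Fin 4 → Fin 3 → ℝ :=
  ![![37/120, 37/120, -1/40], ![49/120, 37/120, -1/40],
    ![37/120, 49/120, -1/40], ![37/120, 37/120, 3/40]]

/-- Quadratic-metric (QM) interpolation functions. -/
noncomputable def phiQM : Fin 10 → (Fin 3 → ℝ) → ℝ :=
  ![fun x => 6391/72 - (800/3) * x 0 - (800/3) * x 1 - (800/3) * x 2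
      + 400 * x 0 * x 1 + 400 * x 0 * x 2 + 400 * x 1 * x 2
      + 200 * x 0 ^ 2 + 200 * x 1 ^ 2 + 200 * x 2 ^ 2,
    fun x => 1591/72 - (400/3) * x 0 + 200 * x 0 ^ 2,
    fun x => 1591/72 - (400/3) * x 1 + 200 * x 1 ^ 2,
    fun x => -1/8 + 200 * x 2 ^ 2,
    fun x => -3071/36 + 400 * x 0 + (370/3) * x 1 + (370/3) * x 2
      - 400 * x 0 * x 1 - 400 * x 0 * x 2 - 400 * x 0 ^ 2,
    fun x => 1369/36 - (370/3) * x 0 - (370/3) * x 1 + 400 * x 0 * x 1,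
    fun x => -3071/36 + (370/3) * x 0 + 400 * x 1 + (370/3) * x 2
      - 400 * x 0 * x 1 - 400 * x 1 * x 2 - 400 * x 1 ^ 2,
    fun x => 83/12 - 10 * x 0 - 10 * x 1 + (800/3) * x 2
      - 400 * x 0 * x 2 - 400 * x 1 * x 2 - 400 * x 2 ^ 2,
    fun x => -37/12 + 10 * x 0 - (370/3) * x 2 + 400 * x 0 * x 2,
    fun x => -37/12 + 10 * x 1 - (370/3) * x 2 + 400 * x 1 * x 2]

/-- The ten QM evaluation points. -/
noncomputable def ptQM : Fin 10 → Fin 3 → ℝ :=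
  ![![37/120, 37/120, -1/40], ![49/120, 37/120, -1/40],
    ![37/120, 49/120, -1/40], ![37/120, 37/120, 3/40],
    ![43/120, 37/120, -1/40], ![43/120, 43/120, -1/40],
    ![37/120, 43/120, -1/40], ![37/120, 37/120, 1/40],
    ![43/120, 37/120, 1/40], ![37/120, 43/120, 1/40]]

/-- The isoparametric map of the wedge element with nodal positions `X`. -/
noncomputable def wedgeMap (X : Fin 15 → Fin 3 → ℝ) (u : Fin 3 → ℝ) : Fin 3 → ℝ :=
  fun m => ∑ i : Fin 15, wedgeShape i u * X i m

/-- The Jacobian matrix `J_mn = ∂X_m/∂u_n` of the isoparametric map. -/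
noncomputable def wedgeJac (X : Fin 15 → Fin 3 → ℝ) (u : Fin 3 → ℝ) :
    Matrix (Fin 3) (Fin 3) ℝ :=
  Matrix.of fun m n => fderiv ℝ (fun v => wedgeMap X v m) u (Pi.single n 1)

/-- The metric (Jacobian determinant) of the isoparametric map. -/
noncomputable def wedgeMetric (X : Fin 15 → Fin 3 → ℝ) (u : Fin 3 → ℝ) : ℝ :=
  (wedgeJac X u).det

/-!
The functions `phiLM k` are barycentric coordinates for the points `ptLM k`: at every `x` they sum
to `1` and average the points to `x`. An affine map preserves such averages, so it equals its
interpolant `∑ k, phiLM k x • g (ptLM k)` pointwise, and the rule is the integral of this identity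
against the weight `φ^i φ^j`, which may be taken term by term.
-/

/-- Generalized barycentric coordinates: functions `w k` on a module expressing every vector `x` as
the affine combination of the points `p k` with weights `w k x`. The points need be neither affinely
independent nor the vertices of a polytope, and the weights may be negative. -/
structure IsBarycentricCoordinates {R ι V : Type*} [Fintype ι] [Ring R] [AddCommGroup V]
    [Module R V] (w : ι → V → R) (p : ι → V) : Prop where
  sum_eq_one : ∀ x, ∑ k, w k x = 1
  sum_smul_eq : ∀ x, ∑ k, w k x • p k = x

namespace IsBarycentricCoordinates

theorem affineMap_apply {R ι V E : Type*} [Fintype ι] [Ring R] [AddCommGroup V] [Module R V]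
    [AddCommGroup E] [Module R E] {w : ι → V → R} {p : ι → V}
    (h : IsBarycentricCoordinates w p) (g : V →ᵃ[R] E) (x : V) :
    g x = ∑ k, w k x • g (p k) := by
  have hw : ∑ k, w k x = 1 := h.sum_eq_one x
  calc
    g x = g (Finset.univ.affineCombination R p (w · x)) := by
      rw [Finset.univ.affineCombination_eq_linear_combination p _ hw, h.sum_smul_eq]
    _ = ∑ k, w k x • g (p k) := by
      rw [Finset.univ.map_affineCombination p _ hw,
        Finset.univ.affineCombination_eq_linear_combination _ _ hw]
      rfl

theorem integral_smul_affineMap {𝕜 ι V E : Type*} [Fintype ι] [RCLike 𝕜] [AddCommGroup V]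
    [Module 𝕜 V] [MeasurableSpace V] [NormedAddCommGroup E] [NormedSpace ℝ E] [NormedSpace 𝕜 E]
    [CompleteSpace E] {w : ι → V → 𝕜} {p : ι → V}
    (h : IsBarycentricCoordinates w p) {μ : Measure V} {f : V → 𝕜}
    (hf : ∀ k, Integrable (fun x => f x * w k x) μ) (g : V →ᵃ[𝕜] E) :
    ∫ x, f x • g x ∂μ = ∑ k, (∫ x, f x * w k x ∂μ) • g (p k) :=
  calc
    ∫ x, f x • g x ∂μ = ∫ x, ∑ k, (f x * w k x) • g (p k) ∂μ := by
      congr with x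
      rw [h.affineMap_apply g x, Finset.smul_sum]
      simp only [smul_smul]
    _ = ∑ k, ∫ x, (f x * w k x) • g (p k) ∂μ :=
      integral_finsetSum _ fun k _ => (hf k).smul_const (g (p k))
    _ = ∑ k, (∫ x, f x * w k x ∂μ) • g (p k) := by
      simp only [integral_smul_const]

end IsBarycentricCoordinates

theorem isBarycentricCoordinates_phiLM_ptLM : IsBarycentricCoordinates phiLM ptLM where
  sum_eq_one x := by
    simp only [Fin.sum_univ_four, phiLM, Matrix.cons_val]
    ring
  sum_smul_eq x := by
    ext m
    simp only [Fin.sum_univ_four, phiLM, ptLM, Matrix.cons_val, Pi.add_apply, Pi.smul_apply,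
      smul_eq_mul]
    fin_cases m <;> dsimp <;> ring

theorem continuous_wedgeShape (i : Fin 15) : Continuous (wedgeShape i) := by
  fin_cases i <;> dsimp [wedgeShape] <;> fun_prop

theorem continuous_phiLM (k : Fin 4) : Continuous (phiLM k) := by
  fin_cases k <;> dsimp [phiLM] <;> fun_prop

theorem isClosed_wedgeDomain : IsClosed wedgeDomain :=
  (isClosed_le (by fun_prop) (by fun_prop)).and <|
    (isClosed_le (by fun_prop) (by fun_prop)).and <|
    (isClosed_le (by fun_prop) (by fun_prop)).and <|
    (isClosed_le (by fun_prop) (by fun_prop)).and <|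
    isClosed_le (by fun_prop) (by fun_prop)

theorem wedgeDomain_subset_Icc : wedgeDomain ⊆ Set.Icc ![0, 0, -1] 1 := by
  rintro x ⟨hξ, hη, hξη, hζ_lower, hζ_upper⟩
  constructor <;> intro m <;> fin_cases m <;> dsimp <;> linarith

theorem isCompact_wedgeDomain : IsCompact wedgeDomain :=
  isCompact_Icc.of_isClosed_subset isClosed_wedgeDomain wedgeDomain_subset_Icc

theorem integrableOn_wedgeShape_mul_wedgeShape_mul_phiLM (i j : Fin 15) (k : Fin 4) :
    IntegrableOn (fun x => wedgeShape i x * wedgeShape j x * phiLM k x) wedgeDomain :=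
  (((continuous_wedgeShape i).mul (continuous_wedgeShape j)).mul
    (continuous_phiLM k)).continuousOn.integrableOn_compact isCompact_wedgeDomain

theorem LM_rule_exact_for_affine_metric_general {E : Type*} [NormedAddCommGroup E]
    [NormedSpace ℝ E] [CompleteSpace E] {μ : Measure (Fin 3 → ℝ)} {f : (Fin 3 → ℝ) → ℝ}
    (hf : ∀ k, Integrable (fun x => f x * phiLM k x) μ) (g : (Fin 3 → ℝ) →ᵃ[ℝ] E) :
    ∫ x, f x • g x ∂μ = ∑ k, (∫ x, f x * phiLM k x ∂μ) • g (ptLM k) :=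
  isBarycentricCoordinates_phiLM_ptLM.integral_smul_affineMap hf g

/-- the four-point LM mass-matrix rule is exact for affine metrics. -/
theorem LM_rule_exact_for_affine_metric (g : (Fin 3 → ℝ) →ᵃ[ℝ] ℝ) (i j : Fin 15) :
    ∫ x in wedgeDomain, wedgeShape i x * wedgeShape j x * g x =
      ∑ k : Fin 4,
        (∫ x in wedgeDomain, wedgeShape i x * wedgeShape j x * phiLM k x) *
          g (ptLM k) :=
  LM_rule_exact_for_affine_metric_general
    (integrableOn_wedgeShape_mul_wedgeShape_mul_phiLM i j) g
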